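/- arXiv:2207.10419 — 2 statements merged into one kernel-verified Lean document; each statement's English description precedes it below -/
import Mathlib

section
/- Let f : (0,∞) → ℂ be a function of bounded variation such that f(u) = O(u^{−N}) as u → ∞ for every N ∈ ℕ, f(u) = O(u²) as u → 0⁺, and ∫₀^∞ f(t) dt = 0. Let g = ℰf and let μ > 1. Then for every u > 0 the series Σ_{k∈ℤ} g(μ^k u) converges absolutely (with geometric bounds on the tails), and the function (Σ_μ g)(u) = Σ_{k∈ℤ} g(μ^k u) is a bounded measurable function on (0,∞) satisfying (Σ_μ g)(μu) = (Σ_μ g)(u) for all u > 0, hence descends to ℝ₊*/μ^ℤ. -/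
/-!
The function `f` is measurable, bounded and `O(x⁻²)` on the whole half-line, so
`S u = ∑ f ((n + 1) u)` converges absolutely and `‖S u‖ ≤ C u⁻²`. On the other hand `u * S u` is
a Riemann sum for `∫ f = 0` with mesh `u`. Comparing `u * f ((n + 1) u)` with the integral of `f`
over `(n u, (n + 1) u]`, the error is at most `u` times the variation of `f` on that cell, so
`‖S u‖` is at most the total variation of `f`, for every `u > 0` (`norm_tsum_le_variation`).

With the factor `u ^ (1/2)` this gives `‖ℰf u‖ ≤ K √u` for all `u > 0` and `‖ℰf u‖ ≤ K / √u` for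
`u ≥ 1`. For `u` in `[1, μ]`, which meets every orbit of `μ ^ ℤ`, the terms `ℰf (μ ^ k u)` are therefore
dominated by a multiple of `(√μ)⁻¹ ^ |k|`, uniformly in `u` (`norm_orbit_le`). Invariance of the
orbit sum under `u ↦ μ ^ m u` carries summability and the bound to all `u > 0`, and measurability
follows since both series are pointwise limits of measurable partial sums.
-/

open MeasureTheory Set Filter Asymptotics

/-- `(ℰ f)(u) = u^{1/2} ∑_{n ≥ 1} f(n u)`. -/
noncomputable def Emap (f : ℝ → ℂ) (u : ℝ) : ℂ :=
  (u : ℂ) ^ ((1 : ℂ)/2) * ∑' n : ℕ, f ((n + 1) * u)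

/-- `(Σ_μ g)(u) = ∑_{k ∈ ℤ} g(μ^k u)`. -/
noncomputable def SigmaMu (μ : ℝ) (g : ℝ → ℂ) (u : ℝ) : ℂ :=
  ∑' k : ℤ, g (μ ^ k * u)

/-! ### Functions of bounded variation on the half-line -/

/-- A complex function of bounded variation is measurable, since its real and imaginary parts
are differences of monotone functions. -/
theorem measurable_restrict_of_bv {f : ℝ → ℂ} (hBV : BoundedVariationOn f (Ioi 0)) :
    Measurable ((Ioi (0:ℝ)).domRestrict f) := by
  have key : ∀ g : ℝ → ℝ, BoundedVariationOn g (Ioi 0) →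
      Measurable ((Ioi (0:ℝ)).domRestrict g) := by
    intro g hg
    obtain ⟨p, q, hp, hq, rfl⟩ :=
      hg.locallyBoundedVariationOn.exists_monotoneOn_sub_monotoneOn
    have hp' : Monotone ((Ioi (0:ℝ)).domRestrict p) := fun a b hab => hp a.2 b.2 hab
    have hq' : Monotone ((Ioi (0:ℝ)).domRestrict q) := fun a b hab => hq a.2 b.2 hab
    exact hp'.measurable.sub hq'.measurable
  have hre := key (Complex.re ∘ f)
    ((Complex.reCLM.lipschitz).comp_boundedVariationOn hBV)
  have him := key (Complex.im ∘ f)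
    ((Complex.imCLM.lipschitz).comp_boundedVariationOn hBV)
  exact measurable_of_re_im hre him

/-- Boundedness together with quadratic decay gives `‖f x‖ ≤ C / x ^ 2` on the whole half-line. -/
theorem exists_quadratic_bound {f : ℝ → ℂ} (hBV : BoundedVariationOn f (Ioi 0))
    (hdecay : f =O[atTop] fun u : ℝ => u ^ (-((2:ℕ):ℤ))) :
    ∃ C : ℝ, 0 ≤ C ∧ ∀ x : ℝ, 0 < x → ‖f x‖ ≤ C ∧ ‖f x‖ ≤ C / x ^ 2 := by
  obtain ⟨c, hc⟩ := hdecay.bound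
  obtain ⟨R, hR⟩ := eventually_atTop.1 hc
  set M := ‖f 1‖ + (eVariationOn f (Ioi 0)).toReal with hM
  have hfM : ∀ x : ℝ, 0 < x → ‖f x‖ ≤ M := by
    intro x hx
    have h := hBV.dist_le (x := x) (y := 1) hx (by simp)
    have h2 : ‖f x‖ ≤ ‖f 1‖ + ‖f x - f 1‖ := norm_le_norm_add_norm_sub' _ _
    rw [dist_eq_norm] at h
    linarith
  have hM0 : 0 ≤ M := (norm_nonneg _).trans (hfM 1 one_pos)
  refine ⟨M + |c| + M * R ^ 2, by positivity, fun x hx => ⟨?_, ?_⟩⟩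
  · have : 0 ≤ |c| + M * R ^ 2 := by positivity
    linarith [hfM x hx]
  · rw [le_div_iff₀ (by positivity)]
    rcases le_total R x with h | h
    · have h1 := hR x h
      have h2 : ‖x ^ (-((2:ℕ):ℤ))‖ = (x ^ 2)⁻¹ := by
        rw [zpow_neg, zpow_natCast, Real.norm_of_nonneg (by positivity)]
      rw [h2] at h1
      have h3 : ‖f x‖ * x ^ 2 ≤ c := by
        rwa [← div_eq_mul_inv, le_div_iff₀ (by positivity)] at h1
      have : 0 ≤ M * R ^ 2 := by positivity
      linarith [le_abs_self c]
    · have h1 : ‖f x‖ * x ^ 2 ≤ M * R ^ 2 :=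
        mul_le_mul (hfM x hx) (pow_le_pow_left₀ hx.le h 2) (by positivity) hM0
      linarith [abs_nonneg c]

theorem integrableOn_of_bounds {f : ℝ → ℂ} (hm : Measurable ((Ioi (0:ℝ)).domRestrict f))
    {C : ℝ} (hC : ∀ x : ℝ, 0 < x → ‖f x‖ ≤ C ∧ ‖f x‖ ≤ C / x ^ 2) :
    IntegrableOn f (Ioi 0) := by
  have hmeas : AEStronglyMeasurable f (volume.restrict (Ioi 0)) :=
    ((aemeasurable_restrict_iff_comap_subtype measurableSet_Ioi).2
      hm.aemeasurable).aestronglyMeasurable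
  rw [← Ioc_union_Ioi_eq_Ioi zero_le_one]
  refine IntegrableOn.union ?_ ?_
  · refine Integrable.mono' (g := fun _ => C) (integrableOn_const (by simp))
      (hmeas.mono_measure (Measure.restrict_mono_set _ Ioc_subset_Ioi_self)) ?_
    filter_upwards [ae_restrict_mem measurableSet_Ioc] with x hx using (hC x hx.1).1
  · have h := (integrableOn_Ioi_rpow_of_lt (a := -2) (by norm_num) one_pos).const_mul C
    refine Integrable.mono' h
      (hmeas.mono_measure (Measure.restrict_mono_set _ (Ioi_subset_Ioi zero_le_one))) ?_
    filter_upwards [ae_restrict_mem measurableSet_Ioi] with x hx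
    have hx0 : (0:ℝ) < x := one_pos.trans hx
    refine (hC x hx0).2.trans_eq ?_
    rw [Real.rpow_neg hx0.le, div_eq_mul_inv]
    norm_num

/-- The increment from `a` to `b` of the cumulative variation `x ↦ Var(f, (0, x])` bounds the
distance from `f b` to the values of `f` on `(a, b]`. Half-open intervals allow `a = 0`. -/
theorem norm_sub_le_variation {f : ℝ → ℂ} (hBV : BoundedVariationOn f (Ioi 0))
    {a t b : ℝ} (ha : 0 ≤ a) (hat : a < t) (htb : t ≤ b) :
    ‖f b - f t‖ ≤ (eVariationOn f (Ioc 0 b)).toReal - (eVariationOn f (Ioc 0 a)).toReal := by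
  have hfin : ∀ s ⊆ Ioi (0:ℝ), eVariationOn f s ≠ ⊤ := fun s hs => hBV.mono hs
  have h1 : eVariationOn f (Ioc 0 a) + edist (f b) (f t) ≤ eVariationOn f (Ioc 0 b) :=
    calc _ ≤ eVariationOn f (Ioc 0 a) + eVariationOn f (Icc t b) := by
          gcongr
          exact eVariationOn.edist_le f (right_mem_Icc.2 htb) (left_mem_Icc.2 htb)
      _ ≤ eVariationOn f (Ioc 0 a ∪ Icc t b) :=
          eVariationOn.add_le_union f fun x hx y hy => hx.2.trans (hat.le.trans hy.1)
      _ ≤ _ := eVariationOn.mono f (union_subset (Ioc_subset_Ioc_right (hat.le.trans htb))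
          fun y hy => ⟨ha.trans_lt (hat.trans_le hy.1), hy.2⟩)
  have h2 := ENNReal.toReal_mono (hfin _ Ioc_subset_Ioi_self) h1
  rw [ENNReal.toReal_add (hfin _ Ioc_subset_Ioi_self) (edist_ne_top _ _), edist_dist,
    ENNReal.toReal_ofReal dist_nonneg, dist_eq_norm] at h2
  linarith

/-! ### The Riemann sum `∑ f (n u)` -/

theorem norm_term_le {f : ℝ → ℂ} {C : ℝ}
    (hC : ∀ x : ℝ, 0 < x → ‖f x‖ ≤ C ∧ ‖f x‖ ≤ C / x ^ 2) {u : ℝ} (hu : 0 < u) (n : ℕ) :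
    ‖f ((n + 1) * u)‖ ≤ C / u ^ 2 * (1 / ((n + 1 : ℕ) : ℝ) ^ 2) := by
  refine (hC _ (by positivity)).2.trans_eq ?_
  push_cast
  field_simp

theorem summable_sq_inv : Summable fun n : ℕ => 1 / ((n + 1 : ℕ) : ℝ) ^ 2 :=
  (summable_nat_add_iff 1).2 (Real.summable_one_div_nat_pow.2 one_lt_two)

theorem summable_terms {f : ℝ → ℂ} {C : ℝ}
    (hC : ∀ x : ℝ, 0 < x → ‖f x‖ ≤ C ∧ ‖f x‖ ≤ C / x ^ 2) {u : ℝ} (hu : 0 < u) :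
    Summable fun n : ℕ => f ((n + 1) * u) :=
  .of_norm_bounded (summable_sq_inv.mul_left _) (norm_term_le hC hu)

/-- When `∫ f = 0`, the sum `∑ f (n u)` is bounded uniformly in `u`: it is `u⁻¹` times a Riemann
sum for `∫ f`, and the error on each cell is at most `u` times the variation of `f` there. -/
theorem norm_tsum_le_variation {f : ℝ → ℂ} (hBV : BoundedVariationOn f (Ioi 0))
    (hI : IntegrableOn f (Ioi 0)) (hint : ∫ t in Ioi (0:ℝ), f t = 0) {u : ℝ} (hu : 0 < u)
    (hs : Summable fun n : ℕ => f ((n + 1) * u)) :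
    ‖∑' n : ℕ, f ((n + 1) * u)‖ ≤ (eVariationOn f (Ioi 0)).toReal := by
  set P : ℝ → ℝ := fun x => (eVariationOn f (Ioc 0 x)).toReal with hP
  have hii : ∀ a b : ℝ, 0 ≤ a → a ≤ b → IntervalIntegrable f volume a b := fun a b ha hab =>
    (intervalIntegrable_iff_integrableOn_Ioc_of_le hab).2
      (hI.mono_set fun x hx => ha.trans_lt hx.1)
  have hcell : ∀ n : ℕ, ‖(u : ℂ) * f ((n + 1) * u) - ∫ t in (n * u)..(((n + 1 : ℕ) : ℝ) * u), f t‖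
      ≤ (P (((n + 1 : ℕ) : ℝ) * u) - P (n * u)) * u := by
    intro n
    have hlen : ((n + 1 : ℕ) : ℝ) * u - n * u = u := by push_cast; ring
    have hle : (n : ℝ) * u ≤ ((n + 1 : ℕ) : ℝ) * u := by linarith
    have h1 : (u : ℂ) * f ((n + 1) * u) - ∫ t in (n * u)..(((n + 1 : ℕ) : ℝ) * u), f t
        = ∫ t in (n * u)..(((n + 1 : ℕ) : ℝ) * u), (f (((n + 1 : ℕ) : ℝ) * u) - f t) := by
      rw [intervalIntegral.integral_sub (by simp) (hii _ _ (by positivity) hle),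
        intervalIntegral.integral_const, hlen]
      simp
    rw [h1]
    have h2 := intervalIntegral.norm_integral_le_of_norm_le_const
      (a := n * u) (b := ((n + 1 : ℕ) : ℝ) * u)
      (f := fun t => f (((n + 1 : ℕ) : ℝ) * u) - f t)
      (C := P (((n + 1 : ℕ) : ℝ) * u) - P (n * u)) (fun t ht => by
        rw [uIoc_of_le hle] at ht
        exact norm_sub_le_variation hBV (by positivity) ht.1 ht.2)
    rwa [hlen, abs_of_pos hu] at h2
  have hfinite : ∀ N : ℕ, ‖(u : ℂ) * ∑ n ∈ Finset.range N, f ((n + 1) * u)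
      - ∫ t in (0:ℝ)..(N * u), f t‖ ≤ (eVariationOn f (Ioi 0)).toReal * u := by
    intro N
    have hadj := intervalIntegral.sum_integral_adjacent_intervals (f := f) (μ := volume)
      (a := fun n : ℕ => (n : ℝ) * u) (n := N)
      (fun k _ => hii _ _ (by positivity) (by gcongr; simp))
    simp only [Nat.cast_zero, zero_mul] at hadj
    rw [← hadj, Finset.mul_sum, ← Finset.sum_sub_distrib]
    refine (norm_sum_le _ _).trans ((Finset.sum_le_sum fun n _ => hcell n).trans ?_)
    rw [← Finset.sum_mul, Finset.sum_range_sub (fun n : ℕ => P (n * u))]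
    refine mul_le_mul_of_nonneg_right ?_ hu.le
    have h3 : P (N * u) ≤ (eVariationOn f (Ioi 0)).toReal :=
      ENNReal.toReal_mono hBV (eVariationOn.mono f Ioc_subset_Ioi_self)
    have h4 : 0 ≤ P (((0 : ℕ) : ℝ) * u) := ENNReal.toReal_nonneg
    linarith
  have hlim1 := (hs.hasSum.tendsto_sum_nat).const_mul (u : ℂ)
  have hlim2 : Tendsto (fun N : ℕ => ∫ t in (0:ℝ)..(N * u), f t) atTop
      (nhds (∫ t in Ioi (0:ℝ), f t)) :=
    intervalIntegral_tendsto_integral_Ioi 0 hI (tendsto_natCast_atTop_atTop.atTop_mul_const hu)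
  have hfin := le_of_tendsto (hlim1.sub hlim2).norm (Eventually.of_forall hfinite)
  rw [hint, sub_zero, norm_mul, Complex.norm_real, Real.norm_of_nonneg hu.le, mul_comm] at hfin
  exact le_of_mul_le_mul_right hfin hu

theorem norm_Emap (f : ℝ → ℂ) {u : ℝ} (hu : 0 < u) :
    ‖Emap f u‖ = √u * ‖∑' n : ℕ, f ((n + 1) * u)‖ := by
  rw [Emap, norm_mul, Complex.norm_cpow_eq_rpow_re_of_pos hu, Real.sqrt_eq_rpow]
  norm_num

theorem measurable_Emap {f : ℝ → ℂ} (hm : Measurable ((Ioi (0:ℝ)).domRestrict f))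
    (hs : ∀ u : ℝ, 0 < u → Summable fun n : ℕ => f ((n + 1) * u)) :
    Measurable (fun u : Ioi (0:ℝ) => Emap f u) := by
  unfold Emap
  refine Measurable.mul (by fun_prop) ?_
  refine measurable_of_tendsto_metrizable' atTop
    (f := fun (s : Finset ℕ) (u : Ioi (0:ℝ)) => ∑ n ∈ s, f ((n + 1) * u))
    (fun s => Finset.measurable_fun_sum _ fun n _ => ?_)
    (tendsto_pi_nhds.2 fun u => (hs u u.2).hasSum)
  have hmap : Measurable fun u : Ioi (0:ℝ) =>
      (⟨((n : ℝ) + 1) * u, mem_Ioi.2 (mul_pos (Nat.cast_add_one_pos n) u.2)⟩ : Ioi (0:ℝ)) :=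
    Measurable.subtype_mk (by fun_prop)
  exact hm.comp hmap

/-! ### Summation over `μ ^ ℤ` -/

theorem SigmaMu_zpow_mul (μ : ℝ) (hμ : μ ≠ 0) (g : ℝ → ℂ) (m : ℤ) (u : ℝ) :
    SigmaMu μ g (μ ^ m * u) = SigmaMu μ g u := by
  unfold SigmaMu
  rw [← (Equiv.addRight m).tsum_eq (fun k : ℤ => g (μ ^ k * u))]
  simp [zpow_add₀ hμ, mul_assoc]

/-- For `u` in `[1, μ]` the orbit sum is dominated by a two-sided geometric
series that does not depend on `u`. -/
theorem norm_orbit_le {g : ℝ → ℂ} {K : ℝ} (hK : 0 ≤ K)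
    (hsmall : ∀ u : ℝ, 0 < u → ‖g u‖ ≤ K * √u) (hlarge : ∀ u : ℝ, 1 ≤ u → ‖g u‖ ≤ K / √u)
    {μ : ℝ} (hμ : 1 < μ) {u : ℝ} (hu : 1 ≤ u) (huμ : u ≤ μ) (k : ℤ) :
    ‖g (μ ^ k * u)‖ ≤ K * √μ * (√μ)⁻¹ ^ k.natAbs := by
  have hμ0 : 0 < μ := one_pos.trans hμ
  have hsμ : 1 ≤ √μ := Real.one_le_sqrt.2 hμ.le
  have hsu : 1 ≤ √u := Real.one_le_sqrt.2 hu
  have hsuμ : √u ≤ √μ := Real.sqrt_le_sqrt huμ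
  have hpow : ∀ n : ℕ, √(μ ^ n) = √μ ^ n := fun n => by
    rw [← Real.sqrt_sq (show 0 ≤ √μ ^ n by positivity), ← pow_mul, mul_comm n 2, pow_mul,
      Real.sq_sqrt hμ0.le]
  obtain ⟨n, rfl | rfl⟩ := k.eq_nat_or_neg
  · have hp : 1 ≤ μ ^ n := one_le_pow₀ hμ.le
    rw [zpow_natCast, Int.natAbs_natCast]
    refine (hlarge _ (one_le_mul_of_one_le_of_one_le hp hu)).trans ?_
    rw [Real.sqrt_mul (by positivity), hpow, inv_pow, ← div_eq_mul_inv,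
      div_le_div_iff₀ (by positivity) (by positivity)]
    have : 1 ≤ √μ * √u := one_le_mul_of_one_le_of_one_le hsμ hsu
    calc K * √μ ^ n = K * √μ ^ n * 1 := by ring
      _ ≤ K * √μ ^ n * (√μ * √u) := by gcongr
      _ = _ := by ring
  · rw [zpow_neg, zpow_natCast, Int.natAbs_neg, Int.natAbs_natCast]
    refine (hsmall _ (by positivity)).trans ?_
    rw [Real.sqrt_mul (by positivity), Real.sqrt_inv, hpow, inv_pow]
    calc K * ((√μ ^ n)⁻¹ * √u) ≤ K * ((√μ ^ n)⁻¹ * √μ) := by gcongr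
      _ = _ := by ring

theorem summable_geometric_natAbs {r : ℝ} (h0 : 0 ≤ r) (h1 : r < 1) :
    Summable fun k : ℤ => r ^ k.natAbs := by
  refine summable_int_iff_summable_nat_and_neg.2 ⟨?_, ?_⟩ <;>
    simpa using summable_geometric_of_lt_one h0 h1

theorem stmt3 (f : ℝ → ℂ)
    (hBV : BoundedVariationOn f (Ioi 0))
    (hdecay : ∀ N : ℕ, f =O[atTop] fun u : ℝ => u ^ (-(N:ℤ)))
    (h0 : f =O[nhdsWithin 0 (Ioi 0)] fun u : ℝ => u ^ 2)
    (hint : ∫ t in Ioi (0:ℝ), f t = 0)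
    (μ : ℝ) (hμ : 1 < μ) :
    (∀ u : ℝ, 0 < u → Summable fun k : ℤ => ‖Emap f (μ ^ k * u)‖) ∧
    (∃ C : ℝ, ∀ u ∈ Ioi (0:ℝ), ‖SigmaMu μ (Emap f) u‖ ≤ C) ∧
    Measurable (fun u : Ioi (0:ℝ) => SigmaMu μ (Emap f) u) ∧
    (∀ u : ℝ, 0 < u → SigmaMu μ (Emap f) (μ * u) = SigmaMu μ (Emap f) u) := by
  have hμ0 : 0 < μ := one_pos.trans hμ
  have hm := measurable_restrict_of_bv hBV
  obtain ⟨C, hC0, hC⟩ := exists_quadratic_bound hBV (hdecay 2)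
  have hI := integrableOn_of_bounds hm hC
  have hs : ∀ u : ℝ, 0 < u → Summable fun n : ℕ => f ((n + 1) * u) :=
    fun u hu => summable_terms hC hu
  set V := (eVariationOn f (Ioi 0)).toReal
  set Z := ∑' n : ℕ, 1 / ((n + 1 : ℕ) : ℝ) ^ 2
  have hV : 0 ≤ V := ENNReal.toReal_nonneg
  have hZ : 0 ≤ Z := tsum_nonneg fun n => by positivity
  set K := V + C * Z with hKdef
  have hK : 0 ≤ K := by positivity
  have hsmall : ∀ u : ℝ, 0 < u → ‖Emap f u‖ ≤ K * √u := by
    intro u hu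
    rw [norm_Emap f hu, mul_comm]
    have h1 : ‖∑' n : ℕ, f ((n + 1) * u)‖ ≤ V :=
      norm_tsum_le_variation hBV hI hint hu (hs u hu)
    have h2 : V ≤ K := le_add_of_nonneg_right (by positivity)
    gcongr
    exact h1.trans h2
  have hlarge : ∀ u : ℝ, 1 ≤ u → ‖Emap f u‖ ≤ K / √u := by
    intro u hu
    have hu0 : 0 < u := one_pos.trans_le hu
    have h1 : ‖∑' n : ℕ, f ((n + 1) * u)‖ ≤ C / u ^ 2 * Z :=
      tsum_of_norm_bounded (summable_sq_inv.hasSum.mul_left _) (norm_term_le hC hu0)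
    have h2 : C * Z ≤ K := le_add_of_nonneg_left hV
    rw [norm_Emap f hu0, le_div_iff₀ (by positivity), mul_right_comm,
      Real.mul_self_sqrt hu0.le]
    calc u * ‖∑' n : ℕ, f ((n + 1) * u)‖ ≤ u * (C / u ^ 2 * Z) := by gcongr
      _ = C * Z / u := by field_simp
      _ ≤ C * Z := div_le_self (by positivity) hu
      _ ≤ K := h2
  have hr1 : (√μ)⁻¹ < 1 := inv_lt_one_of_one_lt₀ (Real.lt_sqrt_of_sq_lt (by simpa using hμ))
  have hgeo : Summable fun k : ℤ => K * √μ * (√μ)⁻¹ ^ k.natAbs :=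
    (summable_geometric_natAbs (by positivity) hr1).mul_left _
  have hdom : ∀ u : ℝ, 0 < u → ∃ (m : ℤ) (v : ℝ), 1 ≤ v ∧ v ≤ μ ∧ u = μ ^ m * v := by
    intro u hu
    obtain ⟨m, hm1, hm2⟩ := exists_mem_Ico_zpow hu hμ
    have hp : 0 < μ ^ m := zpow_pos hμ0 m
    refine ⟨m, u / μ ^ m, (one_le_div hp).2 hm1, ?_, by field_simp⟩
    rw [div_le_iff₀ hp, mul_comm, ← zpow_add_one₀ hμ0.ne']
    exact hm2.le
  have hsum : ∀ u : ℝ, 0 < u → Summable fun k : ℤ => ‖Emap f (μ ^ k * u)‖ := by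
    intro u hu
    obtain ⟨m, v, hv1, hvμ, rfl⟩ := hdom u hu
    have h1 : Summable fun k : ℤ => ‖Emap f (μ ^ k * v)‖ :=
      .of_nonneg_of_le (fun _ => norm_nonneg _)
        (norm_orbit_le hK hsmall hlarge hμ hv1 hvμ) hgeo
    refine ((Equiv.addRight m).summable_iff.2 h1).congr fun k => ?_
    simp [zpow_add₀ hμ0.ne', mul_assoc]
  refine ⟨hsum, ⟨∑' k : ℤ, K * √μ * (√μ)⁻¹ ^ k.natAbs, fun u hu => ?_⟩, ?_, fun u hu => ?_⟩
  · obtain ⟨m, v, hv1, hvμ, rfl⟩ := hdom u hu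
    rw [SigmaMu_zpow_mul μ hμ0.ne']
    exact tsum_of_norm_bounded hgeo.hasSum (norm_orbit_le hK hsmall hlarge hμ hv1 hvμ)
  · refine measurable_of_tendsto_metrizable' atTop
      (f := fun (s : Finset ℤ) (u : Ioi (0:ℝ)) => ∑ k ∈ s, Emap f (μ ^ k * u))
      (fun s => Finset.measurable_fun_sum _ fun k _ => ?_)
      (tendsto_pi_nhds.2 fun u => (hsum u u.2).of_norm.hasSum)
    have hmap : Measurable fun u : Ioi (0:ℝ) =>
        (⟨μ ^ k * u, mem_Ioi.2 (mul_pos (zpow_pos hμ0 k) u.2)⟩ : Ioi (0:ℝ)) :=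
      Measurable.subtype_mk (by fun_prop)
    exact (measurable_Emap hm hs).comp hmap
  · simpa using SigmaMu_zpow_mul μ hμ0.ne' (Emap f) 1 u
end

section
/- Let z₀ ∈ ℂ with |Im(z₀)| < 1/2 and suppose ζ(1/2 − iz₀) = 0. Then for every even Schwartz function f : ℝ → ℂ with ∫_ℝ f(x) dx = 0, one has ∫₀^∞ (ℰf)(u) u^{−iz₀} d*u = 0. -/
/-!
Put `s = 1/2 - i z₀`, so that `0 < re s < 1`. The integral in question is the Mellin transform at
`s` of `F(u) = ∑_{n ≥ 1} f(n u)`. For `re s > 1`, integrating term by term gives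
`mellin F s = ζ(s) * mellin f s` (`mellin_dilateSum_of_one_lt_re`), and the point is to continue
this identity to `re s > 0`.

`F` decays rapidly at infinity. Near `0` it is bounded: as `f` is even with integral zero,
`∫₀^∞ f = 0`, and comparing the Riemann sum `u F(u)` with this integral gives
`|F(u)| ≤ ∫₀^∞ |deriv f|` (`norm_dilateSum_le`). Hence `mellin F` is holomorphic on `re s > 0`, as is
`mellin f`, and the identity theorem yields `(s - 1) mellin F s = (s - 1) ζ(s) mellin f s` there
(`sub_one_mul_mellin_dilateSum`); the factor `s - 1` removes the pole of `ζ`. A zero of `ζ` with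
`0 < re s < 1` therefore makes `mellin F s` vanish.
-/

open MeasureTheory Set

open Filter Topology Asymptotics

lemma schwartz_decay (f : SchwartzMap ℝ ℂ) (k : ℕ) :
    ∃ C : ℝ, 0 ≤ C ∧ ∀ x : ℝ, 0 < x → ‖f x‖ ≤ C * x ^ (-(k : ℝ)) := by
  obtain ⟨C, hC, h⟩ := f.decay k 0
  refine ⟨C, hC.le, fun x hx => ?_⟩
  have := h x
  rw [norm_iteratedFDeriv_zero, Real.norm_of_nonneg hx.le] at this
  rw [Real.rpow_neg hx.le, Real.rpow_natCast, ← div_eq_mul_inv, le_div_iff₀ (by positivity)]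
  linarith

lemma schwartz_term_bound (f : SchwartzMap ℝ ℂ) (k : ℕ) :
    ∃ C : ℝ, 0 ≤ C ∧ ∀ u : ℝ, 0 < u → ∀ n : ℕ,
      ‖f ((n + 1) * u)‖ ≤ C * u ^ (-(k : ℝ)) * ((n : ℝ) + 1) ^ (-(k : ℝ)) := by
  obtain ⟨C, hC, h⟩ := schwartz_decay f k
  refine ⟨C, hC, fun u hu n => ?_⟩
  refine (h _ (by positivity)).trans_eq ?_
  rw [Real.mul_rpow (by positivity) hu.le]
  ring

lemma summable_shift_rpow {r : ℝ} (hr : 1 < r) :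
    Summable fun n : ℕ => ((n : ℝ) + 1) ^ (-r) := by
  have := (summable_nat_add_iff 1).mpr (Real.summable_nat_rpow.mpr (show -r < -1 by linarith))
  simpa using this

lemma summable_norm_dilates (f : SchwartzMap ℝ ℂ) {u : ℝ} (hu : 0 < u) :
    Summable fun n : ℕ => ‖f ((n + 1) * u)‖ := by
  obtain ⟨C, hC, h⟩ := schwartz_term_bound f 2
  refine Summable.of_nonneg_of_le (fun _ => norm_nonneg _) (h u hu) ?_
  exact (summable_shift_rpow (by norm_num)).mul_left _

/-- The sum over positive dilates decays faster than any power at infinity. -/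
lemma dilateSum_isBigO_top (f : SchwartzMap ℝ ℂ) (k : ℕ) (hk : 2 ≤ k) :
    (fun u : ℝ => ∑' n : ℕ, f ((n + 1) * u)) =O[atTop] fun u : ℝ => u ^ (-(k : ℝ)) := by
  obtain ⟨C, hC, h⟩ := schwartz_term_bound f k
  have hs : Summable fun n : ℕ => ((n : ℝ) + 1) ^ (-(k : ℝ)) :=
    summable_shift_rpow (by exact_mod_cast hk)
  refine IsBigO.of_bound (C * ∑' n : ℕ, ((n : ℝ) + 1) ^ (-(k : ℝ))) ?_
  filter_upwards [eventually_gt_atTop 0] with u hu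
  rw [Real.norm_of_nonneg (Real.rpow_nonneg hu.le _)]
  refine (tsum_of_norm_bounded (hs.mul_left _).hasSum (h u hu)).trans_eq ?_
  rw [tsum_mul_left]
  ring

/-- One step of the comparison of a Riemann sum with an integral: the error is at most the
mesh times the variation of `f` over the step. -/
lemma norm_step_le (f : SchwartzMap ℝ ℂ) {a b : ℝ} (hab : a ≤ b) :
    ‖((b - a : ℝ) : ℂ) * f b - ∫ x in a..b, f x‖ ≤ (b - a) * ∫ x in a..b, ‖deriv f x‖ := by
  have hd : Continuous (deriv f) := (f.smooth 1).continuous_deriv le_rfl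
  have h1 : ((b - a : ℝ) : ℂ) * f b - ∫ x in a..b, f x = ∫ x in a..b, (f b - f x) := by
    rw [intervalIntegral.integral_sub intervalIntegrable_const
      (f.continuous.intervalIntegrable _ _)]
    simp
  rw [h1]
  refine (intervalIntegral.norm_integral_le_of_norm_le_const
    (C := ∫ x in a..b, ‖deriv f x‖) fun x hx => ?_).trans_eq ?_
  · rw [uIoc_of_le hab] at hx
    have : f b - f x = ∫ y in x..b, deriv f y := by
      rw [intervalIntegral.integral_deriv_eq_sub (fun y _ => f.differentiableAt)
        (hd.intervalIntegrable _ _)]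
    rw [this]
    refine (intervalIntegral.norm_integral_le_integral_norm hx.2).trans ?_
    exact intervalIntegral.integral_mono_interval hx.1.le hx.2 le_rfl
      (Eventually.of_forall fun _ => norm_nonneg _) (hd.norm.intervalIntegrable _ _)
  · rw [abs_of_nonneg (sub_nonneg.mpr hab), mul_comm]

lemma integral_Ioi_eq_zero (f : SchwartzMap ℝ ℂ) (heven : ∀ x : ℝ, f (-x) = f x)
    (hf0 : ∫ x : ℝ, f x = 0) : ∫ x in Ioi (0 : ℝ), f x = 0 := by
  have h1 : ∫ x in Iic (0 : ℝ), f x = ∫ x in Ioi (0 : ℝ), f x := by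
    have := integral_comp_neg_Iic (0 : ℝ) (fun x => f x)
    simpa [heven] using this
  have h2 := intervalIntegral.integral_Iic_add_Ioi (b := (0 : ℝ)) (f := fun x => f x)
    (μ := volume) f.integrable.integrableOn f.integrable.integrableOn
  rw [hf0, h1] at h2
  simpa [← two_mul] using h2

/-- Since `∫₀^∞ f = 0`, the Riemann sums `u ∑ f(n u)` are `O(u)`, with the total variation of `f` on `(0, ∞)`
as the constant; hence the sum over dilates is bounded uniformly in `u`. -/
lemma norm_dilateSum_le (f : SchwartzMap ℝ ℂ) (hf0 : ∫ x in Ioi (0 : ℝ), f x = 0)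
    {u : ℝ} (hu : 0 < u) :
    ‖∑' n : ℕ, f ((n + 1) * u)‖ ≤ ∫ x in Ioi (0 : ℝ), ‖deriv f x‖ := by
  set V := ∫ x in Ioi (0 : ℝ), ‖deriv f x‖ with hV
  have hd : Continuous (deriv f) := (f.smooth 1).continuous_deriv le_rfl
  have hdi : Integrable (fun x => ‖deriv f x‖) :=
    ((SchwartzMap.derivCLM ℝ ℂ f).integrable (μ := volume)).norm
  have hpart (N : ℕ) : ‖(u : ℂ) * ∑ n ∈ Finset.range N, f ((n + 1) * u)
      - ∫ x in (0 : ℝ)..N * u, f x‖ ≤ u * V := by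
    have e1 : ∫ x in (0 : ℝ)..N * u, f x
        = ∑ n ∈ Finset.range N, ∫ x in (n * u)..((n + 1) * u), f x := by
      have := intervalIntegral.sum_integral_adjacent_intervals (f := fun x => f x)
        (μ := volume) (a := fun n : ℕ => (n : ℝ) * u) (n := N)
        (fun k _ => f.continuous.intervalIntegrable _ _)
      simpa using this.symm
    have e2 : ∫ x in (0 : ℝ)..N * u, ‖deriv f x‖
        = ∑ n ∈ Finset.range N, ∫ x in (n * u)..((n + 1) * u), ‖deriv f x‖ := by
      have := intervalIntegral.sum_integral_adjacent_intervals (f := fun x => ‖deriv f x‖)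
        (μ := volume) (a := fun n : ℕ => (n : ℝ) * u) (n := N)
        (fun k _ => hd.norm.intervalIntegrable _ _)
      simpa using this.symm
    rw [e1, Finset.mul_sum, ← Finset.sum_sub_distrib]
    calc _ ≤ ∑ n ∈ Finset.range N, u * ∫ x in (n * u)..((n + 1) * u), ‖deriv f x‖ := by
          refine norm_sum_le_of_le _ fun n _ => ?_
          have := norm_step_le f (a := n * u) (b := (n + 1) * u) (by nlinarith)
          rwa [show ((n : ℝ) + 1) * u - n * u = u by ring] at this
      _ = u * ∫ x in (0 : ℝ)..N * u, ‖deriv f x‖ := by rw [e2, Finset.mul_sum]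
      _ ≤ u * V := by
          gcongr
          rw [intervalIntegral.integral_of_le (by positivity), hV]
          exact setIntegral_mono_set hdi.integrableOn
            (Eventually.of_forall fun _ => norm_nonneg _) Ioc_subset_Ioi_self.eventuallyLE
  have hNu : Tendsto (fun N : ℕ => (N : ℝ) * u) atTop atTop :=
    tendsto_natCast_atTop_atTop.atTop_mul_const hu
  have hlim1 := intervalIntegral_tendsto_integral_Ioi (μ := volume) (f := fun x => f x) 0
    f.integrable.integrableOn hNu
  rw [hf0] at hlim1
  have hlim2 := ((summable_norm_dilates f hu).of_norm.hasSum.tendsto_sum_nat.const_mul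
    (u : ℂ)).sub hlim1
  have := le_of_tendsto hlim2.norm (Eventually.of_forall hpart)
  rw [sub_zero, norm_mul, Complex.norm_real, Real.norm_of_nonneg hu.le] at this
  exact le_of_mul_le_mul_left this hu

lemma locallyIntegrableOn_dilateSum (f : SchwartzMap ℝ ℂ)
    (hf0 : ∫ x in Ioi (0 : ℝ), f x = 0) :
    LocallyIntegrableOn (fun u : ℝ => ∑' n : ℕ, f ((n + 1) * u)) (Ioi 0) := by
  have hm : AEStronglyMeasurable (fun u : ℝ => ∑' n : ℕ, f ((n + 1) * u))
      (volume.restrict (Ioi 0)) := by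
    refine aestronglyMeasurable_of_tendsto_ae atTop
      (f := fun (N : ℕ) (u : ℝ) => ∑ n ∈ Finset.range N, f ((n + 1) * u)) (fun N => ?_) ?_
    · refine Continuous.aestronglyMeasurable ?_
      exact continuous_finsetSum _ fun n _ => f.continuous.comp (by fun_prop)
    · filter_upwards [ae_restrict_mem measurableSet_Ioi] with u hu
      exact (summable_norm_dilates f hu).of_norm.hasSum.tendsto_sum_nat
  rw [locallyIntegrableOn_iff isOpen_Ioi.isLocallyClosed]
  intro K hK hKc
  refine IntegrableOn.of_bound hKc.measure_lt_top (hm.mono_set hK)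
    (∫ x in Ioi (0 : ℝ), ‖deriv f x‖) ?_
  filter_upwards [ae_restrict_mem hKc.measurableSet] with u hu
  exact norm_dilateSum_le f hf0 (hK hu)

lemma dilateSum_isBigO_zero (f : SchwartzMap ℝ ℂ) (hf0 : ∫ x in Ioi (0 : ℝ), f x = 0) :
    (fun u : ℝ => ∑' n : ℕ, f ((n + 1) * u)) =O[𝓝[>] 0] fun u : ℝ => u ^ (-(0 : ℝ)) := by
  refine IsBigO.of_bound (∫ x in Ioi (0 : ℝ), ‖deriv f x‖) ?_
  filter_upwards [self_mem_nhdsWithin] with u hu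
  simpa using norm_dilateSum_le f hf0 hu

lemma schwartz_isBigO_top (f : SchwartzMap ℝ ℂ) (k : ℕ) :
    (f : ℝ → ℂ) =O[atTop] fun u : ℝ => u ^ (-(k : ℝ)) := by
  obtain ⟨C, -, h⟩ := schwartz_decay f k
  refine IsBigO.of_bound C ?_
  filter_upwards [eventually_gt_atTop 0] with u hu
  rw [Real.norm_of_nonneg (Real.rpow_nonneg hu.le _)]
  exact h u hu

lemma schwartz_isBigO_zero (f : SchwartzMap ℝ ℂ) :
    (f : ℝ → ℂ) =O[𝓝[>] 0] fun u : ℝ => u ^ (-(0 : ℝ)) := by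
  simpa using (f.continuous.tendsto 0).isBigO_one ℝ |>.mono nhdsWithin_le_nhds

lemma exists_exponent (s : ℂ) : ∃ k : ℕ, 2 ≤ k ∧ s.re < (k : ℝ) := by
  obtain ⟨k, hk⟩ := exists_nat_gt s.re
  exact ⟨k + 2, by omega, by push_cast; linarith⟩

/-- Term-by-term integration of the Mellin transform in the half-plane of absolute
convergence of the Dirichlet series. -/
lemma mellin_dilateSum_of_one_lt_re (f : SchwartzMap ℝ ℂ) {s : ℂ} (hs : 1 < s.re) :
    mellin (fun u : ℝ => ∑' n : ℕ, f ((n + 1) * u)) s = riemannZeta s * mellin f s := by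
  obtain ⟨k, -, hk⟩ := exists_exponent s
  have hconv : MellinConvergent f s := mellinConvergent_of_isBigO_rpow
    (f.continuous.locallyIntegrable.locallyIntegrableOn _) (schwartz_isBigO_top f k) hk
    (schwartz_isBigO_zero f) (by linarith)
  have hpos (n : ℕ) : (0 : ℝ) < (n : ℝ) + 1 := by positivity
  have hnorm (n : ℕ) : ∫ t in Ioi (0 : ℝ), ‖(t : ℂ) ^ (s - 1) • f ((n + 1) * t)‖
      = ((n : ℝ) + 1) ^ (-s.re) * ∫ t in Ioi (0 : ℝ), ‖(t : ℂ) ^ (s - 1) • f t‖ := by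
    -- the norms of the integrands are again Mellin integrands, at the real point `re s`
    have key (g : ℝ → ℂ) : ((∫ t in Ioi (0 : ℝ), ‖(t : ℂ) ^ (s - 1) • g t‖ : ℝ) : ℂ)
        = mellin (fun t => ((‖g t‖ : ℝ) : ℂ)) (s.re : ℂ) := by
      rw [mellin, ← integral_complex_ofReal]
      refine setIntegral_congr_fun measurableSet_Ioi fun t ht => ?_
      have ht' : (0 : ℝ) < t := ht
      simp only [norm_mul, Complex.norm_cpow_eq_rpow_re_of_pos ht', smul_eq_mul,
        Complex.sub_re, Complex.one_re]
      rw [Complex.ofReal_mul, Complex.ofReal_cpow ht'.le]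
      push_cast
      rfl
    have := mellin_comp_mul_left (fun t => ((‖f t‖ : ℝ) : ℂ)) (s.re : ℂ) (hpos n)
    rw [← key f, ← key fun t => f ((n + 1) * t)] at this
    rw [← Complex.ofReal_neg, ← Complex.ofReal_cpow (hpos n).le, smul_eq_mul] at this
    exact_mod_cast this
  have hsum := hasSum_integral_of_summable_integral_norm
    (μ := volume.restrict (Ioi (0 : ℝ)))
    (F := fun (n : ℕ) (t : ℝ) => (t : ℂ) ^ (s - 1) • f ((n + 1) * t))
    (fun n => (MellinConvergent.comp_mul_left (f := f) (s := s) (hpos n)).mpr hconv)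
    (by simp_rw [hnorm]; exact (summable_shift_rpow hs).mul_right _)
  have hterm (n : ℕ) : ∫ t in Ioi (0 : ℝ), (t : ℂ) ^ (s - 1) • f ((n + 1) * t)
      = 1 / ((n : ℂ) + 1) ^ s * mellin f s := by
    have := mellin_comp_mul_left f s (hpos n)
    rw [mellin, smul_eq_mul, Complex.cpow_neg] at this
    simpa using this
  rw [mellin, zeta_eq_tsum_one_div_nat_add_one_cpow hs, ← tsum_mul_right]
  simp_rw [← hterm]
  rw [hsum.tsum_eq]
  refine setIntegral_congr_fun measurableSet_Ioi fun t ht => ?_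
  simp only [smul_eq_mul]
  rw [tsum_mul_left]

/-- The entire function `(s - 1) ζ(s)`, with its limit `1` as value at `s = 1`. -/
noncomputable def zetaMulSubOne : ℂ → ℂ :=
  Function.update (fun s => (s - 1) * riemannZeta s) 1 1

lemma differentiable_zetaMulSubOne : Differentiable ℂ zetaMulSubOne := by
  have hne (s : ℂ) (hs : s ≠ 1) : DifferentiableAt ℂ zetaMulSubOne s := by
    have h : DifferentiableAt ℂ (fun s => (s - 1) * riemannZeta s) s :=
      (by fun_prop : DifferentiableAt ℂ (fun s : ℂ => s - 1) s).mul
        (differentiableAt_riemannZeta hs)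
    refine h.congr_of_eventuallyEq ?_
    filter_upwards [isOpen_ne.mem_nhds hs] with w hw
    exact Function.update_of_ne hw _ _
  intro s
  rcases eq_or_ne s 1 with rfl | hs
  · refine (Complex.analyticAt_of_differentiable_on_punctured_nhds_of_continuousAt ?_
      ?_).differentiableAt
    · filter_upwards [self_mem_nhdsWithin] with w hw using hne w hw
    · exact continuousAt_update_same.mpr riemannZeta_residue_one
  · exact hne s hs

/-- Both sides are holomorphic on `re s > 0` and agree on `re s > 1`. -/
lemma sub_one_mul_mellin_dilateSum (f : SchwartzMap ℝ ℂ)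
    (hf0 : ∫ x in Ioi (0 : ℝ), f x = 0) {s : ℂ} (hs : 0 < s.re) :
    (s - 1) * mellin (fun u : ℝ => ∑' n : ℕ, f ((n + 1) * u)) s
      = zetaMulSubOne s * mellin f s := by
  have hopen : IsOpen {s : ℂ | 0 < s.re} := isOpen_lt continuous_const Complex.continuous_re
  have hL : AnalyticOnNhd ℂ
      (fun s => (s - 1) * mellin (fun u : ℝ => ∑' n : ℕ, f ((n + 1) * u)) s)
      {s : ℂ | 0 < s.re} := by
    refine DifferentiableOn.analyticOnNhd (fun w hw => ?_) hopen
    obtain ⟨k, hk2, hk⟩ := exists_exponent w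
    have := mellin_differentiableAt_of_isBigO_rpow (locallyIntegrableOn_dilateSum f hf0)
      (dilateSum_isBigO_top f k hk2) hk (dilateSum_isBigO_zero f hf0) hw
    exact ((by fun_prop : DifferentiableAt ℂ (fun s : ℂ => s - 1) w).mul
      this).differentiableWithinAt
  have hR : AnalyticOnNhd ℂ (fun s => zetaMulSubOne s * mellin f s) {s : ℂ | 0 < s.re} := by
    refine DifferentiableOn.analyticOnNhd (fun w hw => ?_) hopen
    obtain ⟨k, -, hk⟩ := exists_exponent w
    have := mellin_differentiableAt_of_isBigO_rpow
      (f.continuous.locallyIntegrable.locallyIntegrableOn _) (schwartz_isBigO_top f k) hk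
      (schwartz_isBigO_zero f) hw
    exact ((differentiable_zetaMulSubOne w).mul this).differentiableWithinAt
  refine hL.eqOn_of_preconnected_of_eventuallyEq hR
    (convex_halfSpace_re_gt 0).isPreconnected (z₀ := 2) (by simp) ?_ hs
  have h1 : {w : ℂ | 1 < w.re} ∈ 𝓝 (2 : ℂ) :=
    (isOpen_lt continuous_const Complex.continuous_re).mem_nhds (by simp)
  filter_upwards [h1] with w hw
  have hw1 : w ≠ 1 := by
    rintro rfl
    simp at hw
  rw [mellin_dilateSum_of_one_lt_re f hw, zetaMulSubOne, Function.update_of_ne hw1]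
  ring

theorem stmt4 (z₀ : ℂ) (him : |z₀.im| < 1/2)
    (hzero : riemannZeta (1/2 - Complex.I * z₀) = 0) :
    ∀ f : SchwartzMap ℝ ℂ, (∀ x : ℝ, f (-x) = f x) → (∫ x : ℝ, f x = 0) →
      ∫ u in Ioi (0:ℝ), Emap (⇑f) u * (u : ℂ) ^ (-(Complex.I * z₀)) / (u : ℂ) = 0 := by
  intro f heven hf0
  set s : ℂ := 1/2 - Complex.I * z₀ with hs
  have hre : s.re = 1/2 + z₀.im := by simp [hs]
  rw [abs_lt] at him
  have hs0 : 0 < s.re := by linarith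
  have hs1 : s ≠ 1 := by
    intro h
    have := congrArg Complex.re h
    rw [Complex.one_re] at this
    linarith
  have hmellin : ∫ u in Ioi (0:ℝ), Emap (⇑f) u * (u : ℂ) ^ (-(Complex.I * z₀)) / (u : ℂ)
      = mellin (fun u : ℝ => ∑' n : ℕ, f ((n + 1) * u)) s := by
    refine setIntegral_congr_fun measurableSet_Ioi fun u hu => ?_
    have hu0 : (u : ℂ) ≠ 0 := Complex.ofReal_ne_zero.mpr (ne_of_gt hu)
    have hexp : (u : ℂ) ^ (s - 1)
        = (u : ℂ) ^ ((1 : ℂ)/2) * (u : ℂ) ^ (-(Complex.I * z₀)) / (u : ℂ) := by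
      rw [Complex.cpow_sub _ _ hu0, Complex.cpow_one, hs, sub_eq_add_neg,
        Complex.cpow_add _ _ hu0]
    simp only [Emap, smul_eq_mul, hexp]
    ring
  have key := sub_one_mul_mellin_dilateSum f (integral_Ioi_eq_zero f heven hf0) hs0
  rw [zetaMulSubOne, Function.update_of_ne hs1, hzero, mul_zero, zero_mul] at key
  rw [hmellin]
  exact (mul_eq_zero.mp key).resolve_left (sub_ne_zero.mpr hs1)
end
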